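/- Let U_1, …, U_n be independent uniform-[0,1] random variables with order statistics U_{1:n} ≤ ⋯ ≤ U_{n:n}, let θ ∈ (0,1) and b ∈ (0,1]. Then, with p_{i,n} := i/(n+1), there is a constant C (depending only on b, θ) such that E[ Σ_{i=2}^{⌊nθ⌋} p_{i,n}^{−2+b} |U_{i:n} − p_{i,n}| (U_{i:n} − U_{i−1:n}) ] ≤ C (log n) / min{n^{b}, n^{1/2}} for all n ≥ 2; in particular this sum converges to 0 in probability as n → ∞. -/

import Mathlib

open MeasureTheory ProbabilityTheory Filter Set

/-- The `i`-th order statistic (indexed `i = 1, …, n`) of the values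
`X 1 ω, …, X n ω`. -/
noncomputable def orderStat {Ω : Type*} (X : ℕ → Ω → ℝ) (n i : ℕ) (ω : Ω) : ℝ :=
  (((Finset.Icc 1 n).val.map (fun j => X j ω)).sort (· ≤ ·)).getD (i - 1) 0

/-!
For `a = U_{i-1:n} ≤ c = U_{i:n}`, any `p` and any `s > 0`,
`|c - p| (c - a) ≤ ∫_a^c ((x - p)² / s + s) dx`. A point `x` lies in `(a, c]` exactly when `i - 1`
of the variables are below `x`, which has probability `B_{n,i-1}(x)`, a Bernstein polynomial; hence
by Fubini the expectation of the right-hand side is `∫_0^1 ((x - p)² / s + s) B_{n,i-1}(x) dx`.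
Normalised to mass one, `B_{n,i-1}` is a Beta density with mean close to `p = i / (n + 1)` and
standard deviation of order `s = √i / (n + 1)`, so every term of the sum has expectation at most
`2 √i / (n + 1)²` times its weight. The weighted bounds are summed against the harmonic series.
-/

theorem X_mul_bernsteinPolynomial (R : Type*) [CommRing R] (n k : ℕ) :
    ((n : Polynomial R) + 1) * (Polynomial.X * bernsteinPolynomial R n k) =
      ((k : Polynomial R) + 1) * bernsteinPolynomial R (n + 1) (k + 1) := by
  have hchoose : ((n : Polynomial R) + 1) * (n.choose k : Polynomial R) =
      ((n + 1).choose (k + 1) : Polynomial R) * (k + 1) := by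
    exact_mod_cast congrArg (Nat.cast (R := Polynomial R)) (Nat.add_one_mul_choose_eq n k)
  rw [bernsteinPolynomial, bernsteinPolynomial, Nat.add_sub_add_right]
  linear_combination Polynomial.X ^ (k + 1) * (1 - Polynomial.X) ^ (n - k) * hchoose

theorem integral_eval_bernsteinPolynomial {n k : ℕ} (hk : k ≤ n) :
    ∫ x in (0 : ℝ)..1, (bernsteinPolynomial ℝ n k).eval x = 1 / (n + 1) := by
  induction k with
  | zero =>
    simp [bernsteinPolynomial, intervalIntegral.integral_comp_sub_left (fun x ↦ x ^ n)]
  | succ k ih =>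
    have hderiv (x : ℝ) : HasDerivAt (fun x ↦ (bernsteinPolynomial ℝ (n + 1) (k + 1)).eval x)
        ((n + 1) * ((bernsteinPolynomial ℝ n k).eval x -
          (bernsteinPolynomial ℝ n (k + 1)).eval x)) x := by
      simpa [bernsteinPolynomial.derivative_succ] using
        (bernsteinPolynomial ℝ (n + 1) (k + 1)).hasDerivAt x
    have hFTC := intervalIntegral.integral_eq_sub_of_hasDerivAt (a := 0) (b := 1)
      (fun x _ ↦ hderiv x) (Continuous.intervalIntegrable (by fun_prop) _ _)
    have hends : (bernsteinPolynomial ℝ (n + 1) (k + 1)).eval 1 -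
        (bernsteinPolynomial ℝ (n + 1) (k + 1)).eval 0 = 0 := by
      simp [bernsteinPolynomial.eval_at_1, bernsteinPolynomial.eval_at_0, show k ≠ n by omega]
    rw [intervalIntegral.integral_const_mul, intervalIntegral.integral_sub
      (Continuous.intervalIntegrable (by fun_prop) _ _)
      (Continuous.intervalIntegrable (by fun_prop) _ _), ih (by omega), hends] at hFTC
    have := (mul_eq_zero.1 hFTC).resolve_left (by positivity)
    linarith

theorem mul_eval_bernsteinPolynomial (n k : ℕ) (x : ℝ) :
    x * (bernsteinPolynomial ℝ n k).eval x =
      (k + 1) / (n + 1) * (bernsteinPolynomial ℝ (n + 1) (k + 1)).eval x := by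
  have h := congrArg (Polynomial.eval x) (X_mul_bernsteinPolynomial ℝ n k)
  simp only [Polynomial.eval_mul, Polynomial.eval_add, Polynomial.eval_natCast,
    Polynomial.eval_one, Polynomial.eval_X] at h
  rw [div_mul_eq_mul_div, ← h, mul_div_cancel_left₀ _ (by positivity)]

theorem integral_mul_eval_bernsteinPolynomial {n k : ℕ} (hk : k ≤ n) :
    ∫ x in (0 : ℝ)..1, x * (bernsteinPolynomial ℝ n k).eval x =
      (k + 1) / ((n + 1) * (n + 2)) := by
  simp_rw [mul_eval_bernsteinPolynomial]
  rw [intervalIntegral.integral_const_mul, integral_eval_bernsteinPolynomial (by omega)]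
  push_cast
  field_simp
  ring

theorem integral_sq_mul_eval_bernsteinPolynomial {n k : ℕ} (hk : k ≤ n) :
    ∫ x in (0 : ℝ)..1, x ^ 2 * (bernsteinPolynomial ℝ n k).eval x =
      (k + 1) * (k + 2) / ((n + 1) * (n + 2) * (n + 3)) := by
  simp_rw [sq, mul_assoc _ _ (Polynomial.eval _ _), mul_eval_bernsteinPolynomial n k,
    mul_left_comm _ (((k : ℝ) + 1) / (n + 1))]
  rw [intervalIntegral.integral_const_mul, integral_mul_eval_bernsteinPolynomial (by omega)]
  push_cast
  field_simp
  ring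

theorem integral_sub_sq_mul_eval_bernsteinPolynomial_le {n k : ℕ} (hk : k ≤ n) :
    ∫ x in (0 : ℝ)..1, (x - (k + 1) / (n + 1)) ^ 2 * (bernsteinPolynomial ℝ n k).eval x ≤
      ((k : ℝ) + 1) / (n + 1) ^ 3 := by
  have hexpand (x p : ℝ) : (x - p) ^ 2 * (bernsteinPolynomial ℝ n k).eval x =
      x ^ 2 * (bernsteinPolynomial ℝ n k).eval x -
        2 * p * (x * (bernsteinPolynomial ℝ n k).eval x) +
        p ^ 2 * (bernsteinPolynomial ℝ n k).eval x := by
    ring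
  simp_rw [hexpand]
  rw [intervalIntegral.integral_add (Continuous.intervalIntegrable (by fun_prop) _ _)
      (Continuous.intervalIntegrable (by fun_prop) _ _),
    intervalIntegral.integral_sub (Continuous.intervalIntegrable (by fun_prop) _ _)
      (Continuous.intervalIntegrable (by fun_prop) _ _),
    intervalIntegral.integral_const_mul, intervalIntegral.integral_const_mul,
    integral_sq_mul_eval_bernsteinPolynomial hk, integral_mul_eval_bernsteinPolynomial hk,
    integral_eval_bernsteinPolynomial hk, ← sub_nonneg]
  have hkn : (k : ℝ) ≤ n := by exact_mod_cast hk
  have hgap : ((k : ℝ) + 1) / (n + 1) ^ 3 - ((k + 1) * (k + 2) / ((n + 1) * (n + 2) * (n + 3)) -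
      2 * ((k + 1) / (n + 1)) * ((k + 1) / ((n + 1) * (n + 2))) +
        ((k + 1) / (n + 1)) ^ 2 * (1 / (n + 1))) =
      (k + 1) * (3 * (n - k) + n * k + n + 4 + 2 * k) / ((n + 1) ^ 3 * (n + 2) * (n + 3)) := by
    field_simp
    ring
  rw [hgap]
  have := sub_nonneg.2 hkn
  positivity

-- The choice of `s` balances the two summands.
theorem integral_bernsteinPolynomial_mul_sub_sq_div_add_le {n k : ℕ} (hk : k ≤ n) {s : ℝ}
    (hs : s = √(k + 1) / (n + 1)) :
    ∫ x in (0 : ℝ)..1, (bernsteinPolynomial ℝ n k).eval x *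
      ((x - (k + 1) / (n + 1)) ^ 2 / s + s) ≤ 2 * (√(k + 1) / (n + 1) ^ 2) := by
  have hs0 : 0 < s := hs ▸ by positivity
  have hvar : ((k : ℝ) + 1) / (n + 1) ^ 3 = s ^ 2 / (n + 1) := by
    rw [hs, div_pow, Real.sq_sqrt (by positivity)]
    field_simp
  have hexpand (x p : ℝ) : (bernsteinPolynomial ℝ n k).eval x * ((x - p) ^ 2 / s + s) =
      (x - p) ^ 2 * (bernsteinPolynomial ℝ n k).eval x / s +
        s * (bernsteinPolynomial ℝ n k).eval x := by
    ring
  simp_rw [hexpand]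
  rw [intervalIntegral.integral_add (Continuous.intervalIntegrable (by fun_prop) _ _)
      (Continuous.intervalIntegrable (by fun_prop) _ _),
    intervalIntegral.integral_div, intervalIntegral.integral_const_mul,
    integral_eval_bernsteinPolynomial hk]
  calc _ ≤ s ^ 2 / (n + 1) / s + s * (1 / (n + 1)) := by
        gcongr
        exact (integral_sub_sq_mul_eval_bernsteinPolynomial_le hk).trans_eq hvar
    _ = 2 * (s / (n + 1)) := by field_simp; ring
    _ = 2 * (√(k + 1) / (n + 1) ^ 2) := by rw [hs, div_div, sq]

theorem abs_sub_mul_sub_le_integral {a c p s : ℝ} (hac : a ≤ c) (hs : 0 < s) :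
    |c - p| * (c - a) ≤ ∫ x in a..c, ((x - p) ^ 2 / s + s) := by
  have hint : ∫ x in a..c, ((x - p) ^ 2 / s + s) =
      ((c - p) ^ 2 + (c - p) * (a - p) + (a - p) ^ 2) / (3 * s) * (c - a) + s * (c - a) := by
    rw [intervalIntegral.integral_add (Continuous.intervalIntegrable (by fun_prop) _ _)
      (Continuous.intervalIntegrable (by fun_prop) _ _), intervalIntegral.integral_div,
      intervalIntegral.integral_comp_sub_right (fun x ↦ x ^ 2), integral_pow,
      intervalIntegral.integral_const, smul_eq_mul]
    field_simp
    ring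
  have hAMGM : |c - p| ≤ (c - p) ^ 2 / (4 * s) + s := by
    rw [← sq_abs, ← sub_le_iff_le_add, le_div_iff₀ (by positivity)]
    nlinarith [sq_nonneg (|c - p| - 2 * s)]
  have hquad : (c - p) ^ 2 / (4 * s) ≤
      ((c - p) ^ 2 + (c - p) * (a - p) + (a - p) ^ 2) / (3 * s) := by
    rw [div_le_div_iff₀ (by positivity) (by positivity)]
    nlinarith [mul_nonneg hs.le (sq_nonneg ((c - p) + 2 * (a - p)))]
  rw [hint, ← add_mul]
  exact mul_le_mul_of_nonneg_right (by linarith) (sub_nonneg.2 hac)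

theorem lt_countP_iff_getElem_lt {α : Type*} [LinearOrder α] {l : List α} (hl : l.Pairwise (· ≤ ·))
    {k : ℕ} (hk : k < l.length) (x : α) : k < l.countP (· < x) ↔ l[k] < x := by
  induction l generalizing k with
  | nil => simp at hk
  | cons a l ih =>
    obtain ⟨hal, hl⟩ := List.pairwise_cons.1 hl
    rcases lt_or_ge a x with hax | hxa
    · cases k with
      | zero => simp [hax]
      | succ k => simpa [hax] using ih hl (by simpa using hk)
    · have hall : ∀ b ∈ a :: l, x ≤ b := by
        simpa [hxa] using fun b hb ↦ hxa.trans (hal b hb)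
      have hzero : (a :: l).countP (· < x) = 0 :=
        List.countP_eq_zero.2 fun b hb ↦ by simpa using hall b hb
      simpa [hzero] using hall _ (List.getElem_mem hk)

/-- The counting process `n F_n(x-)`, where `F_n` is the empirical distribution function of
`X 1 ω, …, X n ω`. The strict inequality makes `i ≤ countLT X n x ω` equivalent to
`orderStat X n i ω < x`. -/
noncomputable def countLT {Ω : Type*} (X : ℕ → Ω → ℝ) (n : ℕ) (x : ℝ) (ω : Ω) : ℕ :=
  ((Finset.Icc 1 n).filter fun j ↦ X j ω < x).card

section orderStat

variable {Ω : Type*} {X : ℕ → Ω → ℝ} {n i j : ℕ}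

theorem orderStat_eq_getElem (hi : 1 ≤ i) (hin : i ≤ n) (ω : Ω) :
    orderStat X n i ω =
      (((Finset.Icc 1 n).val.map (fun j ↦ X j ω)).sort (· ≤ ·))[i - 1]'(by simp; omega) :=
  List.getD_eq_getElem _ _ _

theorem orderStat_lt_iff (hi : 1 ≤ i) (hin : i ≤ n) {ω : Ω} {x : ℝ} :
    orderStat X n i ω < x ↔ i ≤ countLT X n x ω := by
  have hcount : countLT X n x ω =
      (((Finset.Icc 1 n).val.map (fun j ↦ X j ω)).sort (· ≤ ·)).countP (· < x) := by
    rw [← Multiset.coe_countP, Multiset.sort_eq, Multiset.countP_map]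
    rfl
  rw [orderStat_eq_getElem hi hin, hcount,
    ← lt_countP_iff_getElem_lt (Multiset.pairwise_sort _ _) (by simp; omega)]
  omega

theorem orderStat_le_orderStat (hi : 1 ≤ i) (hij : i ≤ j) (hjn : j ≤ n) (ω : Ω) :
    orderStat X n i ω ≤ orderStat X n j ω :=
  le_of_forall_gt fun _ hx ↦ (orderStat_lt_iff hi (hij.trans hjn)).2 <|
    hij.trans ((orderStat_lt_iff (hi.trans hij) hjn).1 hx)

theorem exists_orderStat_eq (hi : 1 ≤ i) (hin : i ≤ n) (ω : Ω) :
    ∃ j ∈ Finset.Icc 1 n, orderStat X n i ω = X j ω := by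
  have hmem : orderStat X n i ω ∈ ((Finset.Icc 1 n).val.map (fun j ↦ X j ω)).sort (· ≤ ·) :=
    orderStat_eq_getElem hi hin ω ▸ List.getElem_mem _
  simpa [eq_comm] using hmem

theorem orderStat_lt_and_le_succ_iff (hi : 1 ≤ i) (hin : i + 1 ≤ n) {ω : Ω} {x : ℝ} :
    orderStat X n i ω < x ∧ x ≤ orderStat X n (i + 1) ω ↔ countLT X n x ω = i := by
  rw [← not_lt, orderStat_lt_iff hi (by omega), orderStat_lt_iff (by omega) hin]
  omega

theorem measurable_countLT [MeasurableSpace Ω] (hX : ∀ i, Measurable (X i)) (n : ℕ) (x : ℝ) :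
    Measurable (countLT X n x) := by
  unfold countLT
  simp_rw [Finset.card_filter]
  exact Finset.measurable_fun_sum _ fun j _ ↦
    Measurable.ite (measurableSet_lt (hX j) measurable_const) measurable_const measurable_const

theorem measurable_orderStat [MeasurableSpace Ω] (hX : ∀ i, Measurable (X i)) (hi : 1 ≤ i)
    (hin : i ≤ n) : Measurable (orderStat X n i) :=
  measurable_of_Iio fun x ↦ by
    have : orderStat X n i ⁻¹' Iio x = countLT X n x ⁻¹' Ici i := by
      ext ω
      exact orderStat_lt_iff hi hin
    exact this ▸ measurable_countLT hX n x measurableSet_Ici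

end orderStat

section Binomial

variable {Ω ι : Type*} {E : ι → Set Ω} [∀ ω, DecidablePred fun j ↦ ω ∈ E j]

theorem setOf_filter_mem_eq [DecidableEq ι] {S A : Finset ι} (hA : A ⊆ S) :
    {ω | S.filter (fun j ↦ ω ∈ E j) = A} = ⋂ j ∈ S, if j ∈ A then E j else (E j)ᶜ := by
  ext ω
  simp only [mem_ofPred_eq, Finset.ext_iff, Finset.mem_filter, mem_iInter]
  refine forall_congr' fun j ↦ ?_
  have := @hA j
  by_cases j ∈ S <;> by_cases j ∈ A <;> simp_all

variable [MeasurableSpace Ω] {μ : Measure Ω}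

theorem measureReal_filter_mem_eq [DecidableEq ι] (hind : iIndepSet E μ) {S A : Finset ι}
    (hA : A ⊆ S) :
    μ.real {ω | S.filter (fun j ↦ ω ∈ E j) = A} =
      (∏ j ∈ A, μ.real (E j)) * ∏ j ∈ S \ A, μ.real (E j)ᶜ := by
  have hgen (j : ι) : MeasurableSet[MeasurableSpace.generateFrom {E j}] (E j) := .basic _ rfl
  rw [setOf_filter_mem_eq hA, measureReal_def, ((iIndepSet_iff_iIndep _ _).1 hind).meas_biInter
    fun j _ ↦ by split_ifs; exacts [hgen j, (hgen j).compl], ENNReal.toReal_prod]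
  simp_rw [apply_ite, Finset.prod_ite, Finset.filter_mem_eq_inter, Finset.inter_eq_right.2 hA,
    Finset.filter_notMem_eq_sdiff, measureReal_def]

theorem measureReal_card_filter_mem_eq (hind : iIndepSet E μ) (hE : ∀ j, MeasurableSet (E j))
    {S : Finset ι} {q : ℝ} (hq : ∀ j ∈ S, μ.real (E j) = q) (k : ℕ) :
    μ.real {ω | (S.filter fun j ↦ ω ∈ E j).card = k} =
      S.card.choose k * q ^ k * (1 - q) ^ (S.card - k) := by
  classical
  have := hind.isProbabilityMeasure
  have hunion : {ω | (S.filter fun j ↦ ω ∈ E j).card = k} =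
      ⋃ A ∈ S.powersetCard k, {ω | S.filter (fun j ↦ ω ∈ E j) = A} := by
    ext ω
    simp
  have hmeas : ∀ A ∈ S.powersetCard k, MeasurableSet {ω | S.filter (fun j ↦ ω ∈ E j) = A} := by
    intro A hA
    rw [setOf_filter_mem_eq (Finset.mem_powersetCard.1 hA).1]
    exact Finset.measurableSet_biInter _ fun j _ ↦ by
      split_ifs; exacts [hE j, (hE j).compl]
  have hterm : ∀ A ∈ S.powersetCard k, μ.real {ω | S.filter (fun j ↦ ω ∈ E j) = A} =
      q ^ k * (1 - q) ^ (S.card - k) := by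
    intro A hA
    obtain ⟨hAS, rfl⟩ := Finset.mem_powersetCard.1 hA
    rw [measureReal_filter_mem_eq hind hAS, ← Finset.card_sdiff_of_subset hAS]
    congr 1
    · exact Finset.prod_eq_pow_card fun j hj ↦ hq j (hAS hj)
    · exact Finset.prod_eq_pow_card fun j hj ↦ by
        rw [probReal_compl_eq_one_sub (hE j), hq j (Finset.sdiff_subset hj)]
  rw [hunion, measureReal_biUnion_finset
    (fun A _ B _ hAB ↦ disjoint_left.2 fun ω hA hB ↦ hAB (hA.symm.trans hB)) hmeas,
    Finset.sum_congr rfl hterm, Finset.sum_const, Finset.card_powersetCard, nsmul_eq_mul,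
    mul_assoc]

end Binomial

section Fubini

variable {Ω : Type*} [MeasurableSpace Ω] {μ : Measure Ω} {A B : Ω → ℝ} {f : ℝ → ℝ} {u v : ℝ}

theorem integrable_indicator_between [IsFiniteMeasure μ] (hA : Measurable A) (hB : Measurable B)
    (hf : IntegrableOn f (Ioc u v)) :
    Integrable ({q : Ω × ℝ | A q.1 < q.2 ∧ q.2 ≤ B q.1}.indicator fun q ↦ f q.2)
      (μ.prod (volume.restrict (Ioc u v))) := by
  have hmeas : MeasurableSet {q : Ω × ℝ | A q.1 < q.2 ∧ q.2 ≤ B q.1} :=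
    (measurableSet_lt (hA.comp measurable_fst) measurable_snd).inter
      (measurableSet_le measurable_snd (hB.comp measurable_fst))
  exact (Integrable.comp_snd hf μ).indicator hmeas

theorem intervalIntegral_ae_eq_integral_indicator
    (hAB : ∀ᵐ ω ∂μ, u ≤ A ω ∧ A ω ≤ B ω ∧ B ω ≤ v) :
    (fun ω ↦ ∫ x in A ω..B ω, f x) =ᵐ[μ] fun ω ↦ ∫ x in Ioc u v,
      {q : Ω × ℝ | A q.1 < q.2 ∧ q.2 ≤ B q.1}.indicator (fun q ↦ f q.2) (ω, x) := by
  filter_upwards [hAB] with ω ⟨huA, hAB, hBv⟩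
  rw [intervalIntegral.integral_of_le hAB,
    ← inter_eq_self_of_subset_right (Ioc_subset_Ioc huA hBv),
    ← setIntegral_indicator measurableSet_Ioc]
  rfl

theorem integrable_intervalIntegral [IsFiniteMeasure μ] (hA : Measurable A) (hB : Measurable B)
    (hAB : ∀ᵐ ω ∂μ, u ≤ A ω ∧ A ω ≤ B ω ∧ B ω ≤ v) (hf : IntegrableOn f (Ioc u v)) :
    Integrable (fun ω ↦ ∫ x in A ω..B ω, f x) μ :=
  (integrable_indicator_between hA hB hf).integral_prod_left.congr
    (intervalIntegral_ae_eq_integral_indicator hAB).symm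

theorem integral_intervalIntegral [IsFiniteMeasure μ] (hA : Measurable A) (hB : Measurable B)
    (hAB : ∀ᵐ ω ∂μ, u ≤ A ω ∧ A ω ≤ B ω ∧ B ω ≤ v) (hf : IntegrableOn f (Ioc u v)) :
    ∫ ω, (∫ x in A ω..B ω, f x) ∂μ =
      ∫ x in Ioc u v, μ.real {ω | A ω < x ∧ x ≤ B ω} * f x := by
  have hmeas (x : ℝ) : MeasurableSet {ω | A ω < x ∧ x ≤ B ω} :=
    (measurableSet_lt hA measurable_const).inter (measurableSet_le measurable_const hB)
  rw [integral_congr_ae (intervalIntegral_ae_eq_integral_indicator hAB),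
    integral_integral_swap (f := fun ω x ↦
      {q : Ω × ℝ | A q.1 < q.2 ∧ q.2 ≤ B q.1}.indicator (fun q ↦ f q.2) (ω, x))
      (integrable_indicator_between hA hB hf)]
  exact integral_congr_ae (.of_forall fun x ↦ integral_indicator_const (f x) (hmeas x))

end Fubini

theorem rpow_weight_le {x y b : ℝ} (hx : 1 ≤ x) (hxy : x ≤ y) :
    (x / y) ^ (-2 + b) * (√x / y ^ 2) ≤ x⁻¹ / min (y ^ b) (y ^ (1 / 2 : ℝ)) := by
  have hx0 : 0 < x := by linarith
  have hy0 : 0 < y := by linarith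
  have hsplit : (x / y) ^ (-2 + b) * (√x / y ^ 2) = x⁻¹ * (x ^ (b - 1 / 2) / y ^ b) := by
    rw [Real.div_rpow hx0.le hy0.le, Real.sqrt_eq_rpow, ← Real.rpow_natCast, div_mul_div_comm,
      ← Real.rpow_add hx0, ← Real.rpow_add hy0, ← Real.rpow_neg_one, ← mul_div_assoc,
      ← Real.rpow_add hx0]
    ring_nf
  have hpow : x ^ (b - 1 / 2) * min (y ^ b) (y ^ (1 / 2 : ℝ)) ≤ y ^ b := by
    rcases le_total b (1 / 2) with hb | hb
    · calc x ^ (b - 1 / 2) * min (y ^ b) (y ^ (1 / 2 : ℝ)) ≤ 1 * y ^ b := by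
            gcongr
            · exact Real.rpow_le_one_of_one_le_of_nonpos hx (by linarith)
            · exact min_le_left _ _
        _ = y ^ b := one_mul _
    · calc x ^ (b - 1 / 2) * min (y ^ b) (y ^ (1 / 2 : ℝ)) ≤ y ^ (b - 1 / 2) * y ^ (1 / 2 : ℝ) := by
            gcongr
            exact min_le_right _ _
        _ = y ^ b := by rw [← Real.rpow_add hy0, sub_add_cancel]
  rw [hsplit, div_eq_mul_inv x⁻¹]
  gcongr
  rwa [div_le_iff₀ (by positivity), inv_mul_eq_div, le_div_iff₀ (by positivity)]

theorem sum_Icc_two_inv_le_log {n : ℕ} (hn : 1 ≤ n) :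
    ∑ i ∈ Finset.Icc 2 n, (i : ℝ)⁻¹ ≤ Real.log n := by
  have h : 1 + ∑ i ∈ Finset.Ioc 1 n, (i : ℝ)⁻¹ ≤ 1 + Real.log n := by
    simpa [harmonic_eq_sum_Icc, ← Finset.add_sum_Ioc_eq_sum_Icc hn] using
      harmonic_le_one_add_log n
  exact le_of_add_le_add_left h

theorem tendsto_log_div_min_rpow {b c : ℝ} (hb : 0 < b) (hc : 0 < c) :
    Tendsto (fun x : ℝ ↦ Real.log x / min (x ^ b) (x ^ c)) atTop (nhds 0) := by
  refine (isLittleO_log_rpow_atTop (lt_min hb hc)).tendsto_div_nhds_zero.congr' ?_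
  filter_upwards [eventually_ge_atTop 1] with x hx
  rw [(Real.monotone_rpow_of_base_ge_one hx).map_min]

theorem tendsto_measure_lt_abs_of_tendsto_integral {Ω ι : Type*} [MeasurableSpace Ω]
    {μ : Measure Ω} [IsFiniteMeasure μ] {l : Filter ι} {Z : ι → Ω → ℝ}
    (hZ : ∀ i, Integrable (Z i) μ)
    (hlim : Tendsto (fun i ↦ ∫ ω, |Z i ω| ∂μ) l (nhds 0)) {ε : ℝ} (hε : 0 < ε) :
    Tendsto (fun i ↦ μ {ω | ε < |Z i ω|}) l (nhds 0) := by
  have hmarkov (i : ι) : μ.real {ω | ε < |Z i ω|} ≤ (∫ ω, |Z i ω| ∂μ) / ε := by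
    have hsub : {ω | ε < |Z i ω|} ⊆ {ω | ε ≤ |Z i ω|} :=
      fun _ (hω : ε < _) ↦ show ε ≤ _ from hω.le
    rw [le_div_iff₀' hε]
    exact (mul_le_mul_of_nonneg_left (measureReal_mono hsub) hε.le).trans
      (mul_meas_ge_le_integral_of_nonneg (.of_forall fun _ ↦ abs_nonneg _) (hZ i).abs ε)
  rw [← ENNReal.tendsto_toReal_iff (fun _ ↦ measure_ne_top _ _) ENNReal.zero_ne_top]
  exact squeeze_zero (fun _ ↦ measureReal_nonneg) hmarkov (by simpa using hlim.div_const ε)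

section Uniform

variable {Ω : Type*} [MeasurableSpace Ω] {P : Measure Ω}

theorem measureReal_lt_of_map_eq_volume_Icc {Y : Ω → ℝ} (hY : Measurable Y)
    (hunif : P.map Y = volume.restrict (Icc 0 1)) {x : ℝ} (hx : x ∈ Icc 0 1) :
    P.real {ω | Y ω < x} = x := by
  have hinter : Iio x ∩ Icc 0 1 = Ico 0 x := by
    ext y
    simp only [mem_inter_iff, mem_Iio, mem_Icc, mem_Ico]
    exact ⟨fun h ↦ ⟨h.2.1, h.1⟩, fun h ↦ ⟨h.2, h.1, (h.2.trans_le hx.2).le⟩⟩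
  change P.real (Y ⁻¹' Iio x) = x
  rw [← map_measureReal_apply hY measurableSet_Iio, hunif,
    measureReal_restrict_apply measurableSet_Iio, hinter, Real.volume_real_Ico_of_le hx.1, sub_zero]

variable {U : ℕ → Ω → ℝ} {n i : ℕ}

theorem ae_orderStat_mem_Icc (hUmeas : ∀ j, Measurable (U j))
    (hUunif : ∀ j, P.map (U j) = volume.restrict (Icc 0 1)) (hi : 1 ≤ i) (hin : i ≤ n) :
    ∀ᵐ ω ∂P, orderStat U n i ω ∈ Icc (0 : ℝ) 1 := by
  have hmem (j : ℕ) : ∀ᵐ ω ∂P, U j ω ∈ Icc (0 : ℝ) 1 :=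
    ae_of_ae_map (hUmeas j).aemeasurable (hUunif j ▸ ae_restrict_mem measurableSet_Icc)
  filter_upwards [ae_all_iff.2 hmem] with ω hω
  obtain ⟨j, -, hj⟩ := exists_orderStat_eq (X := U) hi hin ω
  exact hj ▸ hω j

theorem measureReal_countLT_eq (hUmeas : ∀ j, Measurable (U j)) (hUindep : iIndepFun U P)
    (hUunif : ∀ j, P.map (U j) = volume.restrict (Icc 0 1)) {x : ℝ} (hx : x ∈ Icc 0 1) (k : ℕ) :
    P.real {ω | countLT U n x ω = k} = (bernsteinPolynomial ℝ n k).eval x := by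
  have hmeas (j : ℕ) : MeasurableSet {ω | U j ω < x} := hUmeas j measurableSet_Iio
  have hindep : iIndepSet (fun j ↦ {ω | U j ω < x}) P :=
    (iIndepSet_iff_meas_biInter hmeas).2 fun S ↦
      hUindep.measure_inter_preimage_eq_mul S (sets := fun _ ↦ Iio x) fun _ _ ↦ measurableSet_Iio
  have hbinomial := measureReal_card_filter_mem_eq hindep hmeas (S := Finset.Icc 1 n)
    (fun j _ ↦ measureReal_lt_of_map_eq_volume_Icc (hUmeas j) (hUunif j) hx) k
  simpa [bernsteinPolynomial, countLT] using hbinomial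

theorem ae_zero_le_orderStat_le_succ_le_one (hUmeas : ∀ j, Measurable (U j))
    (hUunif : ∀ j, P.map (U j) = volume.restrict (Icc 0 1)) (hi : 1 ≤ i) (hin : i + 1 ≤ n) :
    ∀ᵐ ω ∂P, 0 ≤ orderStat U n i ω ∧ orderStat U n i ω ≤ orderStat U n (i + 1) ω ∧
      orderStat U n (i + 1) ω ≤ 1 := by
  filter_upwards [ae_orderStat_mem_Icc (n := n) hUmeas hUunif hi (by omega),
    ae_orderStat_mem_Icc hUmeas hUunif (by omega) hin] with ω h h'
  exact ⟨h.1, orderStat_le_orderStat hi (by omega) hin ω, h'.2⟩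

theorem integrable_intervalIntegral_orderStat [IsFiniteMeasure P]
    (hUmeas : ∀ j, Measurable (U j)) (hUunif : ∀ j, P.map (U j) = volume.restrict (Icc 0 1))
    (hi : 1 ≤ i) (hin : i + 1 ≤ n) {f : ℝ → ℝ} (hf : IntegrableOn f (Ioc 0 1)) :
    Integrable (fun ω ↦ ∫ x in orderStat U n i ω..orderStat U n (i + 1) ω, f x) P :=
  integrable_intervalIntegral (measurable_orderStat hUmeas hi (by omega))
    (measurable_orderStat hUmeas (by omega) hin)
    (ae_zero_le_orderStat_le_succ_le_one hUmeas hUunif hi hin) hf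

theorem integral_intervalIntegral_orderStat (hUmeas : ∀ j, Measurable (U j))
    (hUindep : iIndepFun U P) (hUunif : ∀ j, P.map (U j) = volume.restrict (Icc 0 1))
    (hi : 1 ≤ i) (hin : i + 1 ≤ n) {f : ℝ → ℝ} (hf : IntegrableOn f (Ioc 0 1)) :
    ∫ ω, (∫ x in orderStat U n i ω..orderStat U n (i + 1) ω, f x) ∂P =
      ∫ x in (0 : ℝ)..1, (bernsteinPolynomial ℝ n i).eval x * f x := by
  have := hUindep.isProbabilityMeasure
  rw [integral_intervalIntegral (measurable_orderStat hUmeas hi (by omega))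
      (measurable_orderStat hUmeas (by omega) hin)
      (ae_zero_le_orderStat_le_succ_le_one hUmeas hUunif hi hin) hf,
    intervalIntegral.integral_of_le zero_le_one]
  refine setIntegral_congr_fun measurableSet_Ioc fun x hx ↦ ?_
  simp only [orderStat_lt_and_le_succ_iff hi hin,
    measureReal_countLT_eq hUmeas hUindep hUunif (Ioc_subset_Icc_self hx)]

theorem integrable_abs_orderStat_sub_mul_spacing [IsFiniteMeasure P]
    (hUmeas : ∀ j, Measurable (U j)) (hUunif : ∀ j, P.map (U j) = volume.restrict (Icc 0 1))
    (hi : 2 ≤ i) (hin : i ≤ n) (p : ℝ) :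
    Integrable (fun ω ↦ |orderStat U n i ω - p| *
      (orderStat U n i ω - orderStat U n (i - 1) ω)) P := by
  obtain ⟨k, rfl⟩ := Nat.exists_eq_add_of_le' (one_le_two.trans hi)
  rw [Nat.add_sub_cancel]
  have hmeas : Measurable (orderStat U n k) := measurable_orderStat hUmeas (by omega) (by omega)
  have hmeas' : Measurable (orderStat U n (k + 1)) := measurable_orderStat hUmeas (by omega) hin
  refine (integrable_intervalIntegral_orderStat hUmeas hUunif (i := k) (by omega) hin
    (f := fun x ↦ (x - p) ^ 2 / 1 + 1) (Continuous.integrableOn_Ioc (by fun_prop))).mono'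
    (by fun_prop) (.of_forall fun ω ↦ ?_)
  have hmono : orderStat U n k ω ≤ orderStat U n (k + 1) ω :=
    orderStat_le_orderStat (by omega) (by omega) hin ω
  rw [Real.norm_of_nonneg (mul_nonneg (abs_nonneg _) (sub_nonneg.2 hmono))]
  exact abs_sub_mul_sub_le_integral hmono one_pos

theorem integral_abs_orderStat_sub_mul_spacing_le (hUmeas : ∀ j, Measurable (U j))
    (hUindep : iIndepFun U P) (hUunif : ∀ j, P.map (U j) = volume.restrict (Icc 0 1))
    (hi : 2 ≤ i) (hin : i ≤ n) :
    ∫ ω, |orderStat U n i ω - i / (n + 1)| * (orderStat U n i ω - orderStat U n (i - 1) ω) ∂P ≤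
      2 * (√i / (n + 1) ^ 2) := by
  have := hUindep.isProbabilityMeasure
  have hintegrable := integrable_abs_orderStat_sub_mul_spacing hUmeas hUunif hi hin (i / (n + 1))
  obtain ⟨k, rfl⟩ := Nat.exists_eq_add_of_le' (one_le_two.trans hi)
  simp only [Nat.add_sub_cancel, Nat.cast_add_one] at hintegrable ⊢
  have hk : 1 ≤ k := by omega
  obtain ⟨s, hs⟩ : ∃ s : ℝ, s = √(k + 1) / (n + 1) := ⟨_, rfl⟩
  have hs0 : 0 < s := hs ▸ by positivity
  have hf : IntegrableOn (fun x : ℝ ↦ (x - (k + 1) / (n + 1)) ^ 2 / s + s) (Ioc 0 1) :=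
    Continuous.integrableOn_Ioc (by fun_prop)
  calc _ ≤ ∫ ω, (∫ x in orderStat U n k ω..orderStat U n (k + 1) ω,
          ((x - (k + 1) / (n + 1)) ^ 2 / s + s)) ∂P :=
        integral_mono hintegrable
          (integrable_intervalIntegral_orderStat hUmeas hUunif hk hin hf) fun ω ↦
          abs_sub_mul_sub_le_integral (orderStat_le_orderStat hk k.le_succ hin ω) hs0
    _ = ∫ x in (0 : ℝ)..1, (bernsteinPolynomial ℝ n k).eval x *
          ((x - (k + 1) / (n + 1)) ^ 2 / s + s) :=
        integral_intervalIntegral_orderStat hUmeas hUindep hUunif hk hin hf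
    _ ≤ 2 * (√(k + 1) / (n + 1) ^ 2) :=
        integral_bernsteinPolynomial_mul_sub_sq_div_add_le (by omega) hs

theorem rpow_mul_integral_abs_orderStat_sub_mul_spacing_le (hUmeas : ∀ j, Measurable (U j))
    (hUindep : iIndepFun U P) (hUunif : ∀ j, P.map (U j) = volume.restrict (Icc 0 1))
    {b : ℝ} (hb : 0 ≤ b) (hi : 2 ≤ i) (hin : i ≤ n) :
    ((i : ℝ) / (n + 1)) ^ (-2 + b) * ∫ ω, |orderStat U n i ω - i / (n + 1)| *
        (orderStat U n i ω - orderStat U n (i - 1) ω) ∂P ≤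
      2 / min ((n : ℝ) ^ b) ((n : ℝ) ^ (1 / 2 : ℝ)) * (i : ℝ)⁻¹ := by
  have hi1 : (1 : ℝ) ≤ i := by exact_mod_cast one_le_two.trans hi
  have hin' : (i : ℝ) ≤ n := by exact_mod_cast hin
  have : (0 : ℝ) < n := by linarith
  calc _ ≤ ((i : ℝ) / (n + 1)) ^ (-2 + b) * (2 * (√i / (n + 1) ^ 2)) := by
        gcongr
        exact integral_abs_orderStat_sub_mul_spacing_le hUmeas hUindep hUunif hi hin
    _ ≤ 2 * ((i : ℝ)⁻¹ / min (((n : ℝ) + 1) ^ b) (((n : ℝ) + 1) ^ (1 / 2 : ℝ))) := by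
        rw [mul_left_comm]
        gcongr
        exact rpow_weight_le hi1 (by linarith)
    _ ≤ 2 * ((i : ℝ)⁻¹ / min ((n : ℝ) ^ b) ((n : ℝ) ^ (1 / 2 : ℝ))) := by
        gcongr <;> linarith
    _ = _ := by ring

end Uniform

section WeightedDeviationSum

variable {Ω : Type*} {U : ℕ → Ω → ℝ} {n m : ℕ}

/-- The sum `∑_{i=2}^m p_{i,n}^{-2+b} |U_{i:n} - p_{i,n}| (U_{i:n} - U_{i-1:n})` with
`p_{i,n} = i / (n + 1)`, for an arbitrary truncation level `m` in place of `⌊nθ⌋`. -/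
noncomputable def weightedDeviationSum (U : ℕ → Ω → ℝ) (b : ℝ) (n m : ℕ) (ω : Ω) : ℝ :=
  ∑ i ∈ Finset.Icc 2 m, ((i : ℝ) / (n + 1)) ^ (-2 + b) *
    (|orderStat U n i ω - i / (n + 1)| * (orderStat U n i ω - orderStat U n (i - 1) ω))

theorem weightedDeviationSum_nonneg (U : ℕ → Ω → ℝ) (b : ℝ) (hmn : m ≤ n) (ω : Ω) :
    0 ≤ weightedDeviationSum U b n m ω := by
  refine Finset.sum_nonneg fun i hi ↦ ?_
  obtain ⟨hi2, him⟩ := Finset.mem_Icc.1 hi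
  have := sub_nonneg.2 (orderStat_le_orderStat (X := U) (j := i) (by omega) (Nat.sub_le i 1)
    (him.trans hmn) ω)
  positivity

variable [MeasurableSpace Ω] {P : Measure Ω}

theorem integrable_weightedDeviationSum [IsFiniteMeasure P] (hUmeas : ∀ j, Measurable (U j))
    (hUunif : ∀ j, P.map (U j) = volume.restrict (Icc 0 1)) (b : ℝ) (hmn : m ≤ n) :
    Integrable (weightedDeviationSum U b n m) P :=
  integrable_finsetSum _ fun i hi ↦ by
    obtain ⟨hi2, him⟩ := Finset.mem_Icc.1 hi
    exact (integrable_abs_orderStat_sub_mul_spacing hUmeas hUunif hi2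
      (him.trans hmn) _).const_mul _

theorem integral_weightedDeviationSum_le (hUmeas : ∀ j, Measurable (U j))
    (hUindep : iIndepFun U P) (hUunif : ∀ j, P.map (U j) = volume.restrict (Icc 0 1))
    {b : ℝ} (hb : 0 ≤ b) (hn : 1 ≤ n) (hmn : m ≤ n) :
    ∫ ω, weightedDeviationSum U b n m ω ∂P ≤
      2 * Real.log n / min ((n : ℝ) ^ b) ((n : ℝ) ^ (1 / 2 : ℝ)) := by
  have := hUindep.isProbabilityMeasure
  unfold weightedDeviationSum
  rw [integral_finsetSum _ fun i hi ↦
    (integrable_abs_orderStat_sub_mul_spacing hUmeas hUunif (Finset.mem_Icc.1 hi).1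
      ((Finset.mem_Icc.1 hi).2.trans hmn) _).const_mul _]
  simp_rw [integral_const_mul]
  calc _ ≤ ∑ i ∈ Finset.Icc 2 m, 2 / min ((n : ℝ) ^ b) ((n : ℝ) ^ (1 / 2 : ℝ)) * (i : ℝ)⁻¹ :=
        Finset.sum_le_sum fun i hi ↦ rpow_mul_integral_abs_orderStat_sub_mul_spacing_le hUmeas
          hUindep hUunif hb (Finset.mem_Icc.1 hi).1 ((Finset.mem_Icc.1 hi).2.trans hmn)
    _ ≤ ∑ i ∈ Finset.Icc 2 n, 2 / min ((n : ℝ) ^ b) ((n : ℝ) ^ (1 / 2 : ℝ)) * (i : ℝ)⁻¹ :=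
        Finset.sum_le_sum_of_subset_of_nonneg (Finset.Icc_subset_Icc_right hmn)
          fun _ _ _ ↦ by positivity
    _ ≤ 2 / min ((n : ℝ) ^ b) ((n : ℝ) ^ (1 / 2 : ℝ)) * Real.log n := by
        rw [← Finset.mul_sum]
        gcongr
        exact sum_Icc_two_inv_le_log hn
    _ = _ := div_mul_eq_mul_div _ _ _

end WeightedDeviationSum

theorem weighted_deviation_spacings_first_moment_general
    {Ω : Type*} [MeasurableSpace Ω] {P : Measure Ω} {U : ℕ → Ω → ℝ}
    (hUmeas : ∀ i, Measurable (U i)) (hUindep : iIndepFun U P)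
    (hUunif : ∀ i, P.map (U i) = volume.restrict (Icc 0 1))
    {m : ℕ → ℕ} (hm : ∀ n, m n ≤ n) {b : ℝ} (hb : 0 < b) :
    (∀ n : ℕ, 1 ≤ n → ∫ ω, weightedDeviationSum U b n (m n) ω ∂P ≤
      2 * Real.log n / min ((n : ℝ) ^ b) ((n : ℝ) ^ (1 / 2 : ℝ))) ∧
    ∀ ε > 0, Tendsto (fun n ↦ P {ω | ε < |weightedDeviationSum U b n (m n) ω|})
      atTop (nhds 0) := by
  have := hUindep.isProbabilityMeasure
  have hbound (n : ℕ) (hn : 1 ≤ n) :=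
    integral_weightedDeviationSum_le hUmeas hUindep hUunif hb.le hn (hm n)
  refine ⟨hbound, fun ε hε ↦ tendsto_measure_lt_abs_of_tendsto_integral
    (fun n ↦ integrable_weightedDeviationSum hUmeas hUunif b (hm n)) ?_ hε⟩
  have hrate : Tendsto (fun n : ℕ ↦ 2 * Real.log n / min ((n : ℝ) ^ b) ((n : ℝ) ^ (1 / 2 : ℝ)))
      atTop (nhds 0) := by
    simpa [mul_div_assoc] using ((tendsto_log_div_min_rpow hb one_half_pos).comp
      tendsto_natCast_atTop_atTop).const_mul 2
  simp_rw [abs_of_nonneg (weightedDeviationSum_nonneg U b (hm _) _)]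
  exact squeeze_zero' (.of_forall fun n ↦ integral_nonneg (weightedDeviationSum_nonneg U b (hm n)))
    ((eventually_ge_atTop 1).mono hbound) hrate

/-- For iid uniform-[0,1] random variables, `θ ∈ (0,1)` and `b ∈ (0,1]`, there is a
constant `C` such that, with `p_{i,n} = i/(n+1)`,
`E[Σ_{i=2}^{⌊nθ⌋} p_{i,n}^{−2+b} |U_{i:n} − p_{i,n}| (U_{i:n} − U_{i−1:n})]
  ≤ C log n / min(n^b, n^{1/2})` for all `n ≥ 2`;
in particular the sum converges to `0` in probability. -/
theorem weighted_deviation_spacings_first_moment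
    {Ω : Type*} [MeasurableSpace Ω] (P : Measure Ω) [IsProbabilityMeasure P]
    (U : ℕ → Ω → ℝ)
    (hUmeas : ∀ i, Measurable (U i))
    (hUindep : iIndepFun U P)
    (hUunif : ∀ i, Measure.map (U i) P = volume.restrict (Icc (0:ℝ) 1))
    (θ b : ℝ) (hθ : θ ∈ Ioo (0:ℝ) 1) (hb : 0 < b) (hb1 : b ≤ 1) :
    (∃ C : ℝ, 0 < C ∧ ∀ n : ℕ, 2 ≤ n →
      (∫ ω, ∑ i ∈ Finset.Icc (2:ℕ) ⌊(n:ℝ) * θ⌋₊,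
          ((i:ℝ) / ((n:ℝ) + 1)) ^ (-2 + b : ℝ) *
            (|orderStat U n i ω - (i:ℝ) / ((n:ℝ) + 1)| *
              (orderStat U n i ω - orderStat U n (i - 1) ω)) ∂P)
        ≤ C * Real.log n / min ((n:ℝ) ^ (b : ℝ)) ((n:ℝ) ^ ((1:ℝ)/2))) ∧
    ∀ ε > 0, Tendsto (fun n : ℕ =>
      P {ω | ε < |∑ i ∈ Finset.Icc (2:ℕ) ⌊(n:ℝ) * θ⌋₊,
          ((i:ℝ) / ((n:ℝ) + 1)) ^ (-2 + b : ℝ) *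
            (|orderStat U n i ω - (i:ℝ) / ((n:ℝ) + 1)| *
              (orderStat U n i ω - orderStat U n (i - 1) ω))|})
      atTop (nhds 0) := by
  have hm (n : ℕ) : ⌊(n : ℝ) * θ⌋₊ ≤ n :=
    Nat.floor_le_of_le (mul_le_of_le_one_right n.cast_nonneg hθ.2.le)
  obtain ⟨hbound, hprob⟩ :=
    weighted_deviation_spacings_first_moment_general hUmeas hUindep hUunif hm hb
  exact ⟨⟨2, two_pos, fun n hn ↦ hbound n (by omega)⟩, hprob⟩
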